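/- Let (t, n, b) be a smooth right-handed orthonormal frame on an open set U ⊆ ℝ³ with Ω_b nowhere zero. For i = 1, 2 let α_i be smooth nowhere-zero scalar functions and μ_i smooth scalar functions on U, each μ_i satisfying the Riccati equation ∂_s μ_i = Ω_n + μ_i Ω_nb + μ_i² Ω_b (so that J_i = α_i(n + μ_i b) are Poisson vectors). If ∂_s ln(α₂/α₁) = (μ₁ − μ₂) Ω_b on U, then J₁ and J₂ are compatible: J₁·(curl J₂) + J₂·(curl J₁) = 0 on U. -/

import Mathlib

/-!
The expression `J₁·curl J₂ + J₂·curl J₁` is a symmetric biadditive form `crossHel J₁ J₂` in the two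
fields, and the product rule for the curl gives `crossHel F (g G) = g crossHel F G - (F × G)·∇g`.
Put `vᵢ = n + μᵢ b` and recall that `n × b = t`. Expanding,
`crossHel v₁ v₂ = 2 Ωₙ + (μ₁ + μ₂) Ωₙᵦ + 2 μ₁ μ₂ Ωᵦ - ∂ₛμ₁ - ∂ₛμ₂`,
which the two Riccati equations turn into `-(μ₁ - μ₂)² Ωᵦ`. Since `v₁ × v₂ = (μ₂ - μ₁) t`, passing
to `Jᵢ = αᵢ vᵢ` gives
`crossHel J₁ J₂ = α₁ α₂ (crossHel v₁ v₂ + (μ₁ - μ₂) ∂ₛ ln (α₂ / α₁))`,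
and the two terms cancel.
-/

noncomputable section

/-- Three-dimensional Euclidean space. -/
abbrev E3 : Type := EuclideanSpace ℝ (Fin 3)

/-- The Euclidean dot product on ℝ³. -/
def dot (u v : E3) : ℝ := ∑ i, u i * v i

/-- The cross product on ℝ³. -/
def cross (u v : E3) : E3 :=
  (WithLp.equiv 2 (Fin 3 → ℝ)).symm
    ![u 1 * v 2 - u 2 * v 1, u 2 * v 0 - u 0 * v 2, u 0 * v 1 - u 1 * v 0]

/-- Partial derivative of a scalar function in the `i`-th coordinate direction. -/
def pd (i : Fin 3) (f : E3 → ℝ) (x : E3) : ℝ :=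
  fderiv ℝ f x (EuclideanSpace.single i 1)

/-- The gradient ∇f of a scalar function. -/
def grad (f : E3 → ℝ) (x : E3) : E3 :=
  (WithLp.equiv 2 (Fin 3 → ℝ)).symm ![pd 0 f x, pd 1 f x, pd 2 f x]

/-- The curl ∇×F of a vector field. -/
def curl (F : E3 → E3) (x : E3) : E3 :=
  (WithLp.equiv 2 (Fin 3 → ℝ)).symm
    ![pd 1 (fun y => F y 2) x - pd 2 (fun y => F y 1) x,
      pd 2 (fun y => F y 0) x - pd 0 (fun y => F y 2) x,
      pd 0 (fun y => F y 1) x - pd 1 (fun y => F y 0) x]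

/-- Directional derivative ∂ₛ f = t·∇f of a scalar function along a vector field t. -/
def ds (t : E3 → E3) (f : E3 → ℝ) (x : E3) : ℝ := dot (t x) (grad f x)

/-- Componentwise directional derivative (u·∇)w of a vector field w along u. -/
def dirDeriv (u w : E3 → E3) (x : E3) : E3 :=
  (WithLp.equiv 2 (Fin 3 → ℝ)).symm
    ![fderiv ℝ (fun y => w y 0) x (u x),
      fderiv ℝ (fun y => w y 1) x (u x),
      fderiv ℝ (fun y => w y 2) x (u x)]

/-- Helicity density w·(curl w) of a vector field. -/
def hel (w : E3 → E3) (x : E3) : ℝ := dot (w x) (curl w x)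

/-- Cross-helicity sum n·(curl b) + b·(curl n). -/
def crossHel (n b : E3 → E3) (x : E3) : ℝ :=
  dot (n x) (curl b x) + dot (b x) (curl n x)

/-- A smooth right-handed orthonormal (Serret–Frenet type) frame on U. -/
def IsFrameOn (t n b : E3 → E3) (U : Set E3) : Prop :=
  ContDiffOn ℝ (⊤ : ℕ∞) t U ∧ ContDiffOn ℝ (⊤ : ℕ∞) n U ∧ ContDiffOn ℝ (⊤ : ℕ∞) b U ∧
  ∀ x ∈ U, ‖t x‖ = 1 ∧ ‖n x‖ = 1 ∧ ‖b x‖ = 1 ∧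
    dot (t x) (n x) = 0 ∧ dot (t x) (b x) = 0 ∧ dot (n x) (b x) = 0 ∧
    b x = cross (t x) (n x)

open scoped Matrix Topology

section VectorAlgebra

theorem dot_eq_dotProduct (u v : E3) : dot u v = u.ofLp ⬝ᵥ v.ofLp := rfl

theorem cross_eq_toLp (u v : E3) : cross u v = WithLp.toLp 2 (u.ofLp ⨯₃ v.ofLp) := rfl

theorem dot_add_left (u v w : E3) : dot (u + v) w = dot u w + dot v w :=
  add_dotProduct _ _ _

theorem dot_add_right (u v w : E3) : dot u (v + w) = dot u v + dot u w :=
  dotProduct_add _ _ _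

theorem dot_smul_left (a : ℝ) (u v : E3) : dot (a • u) v = a * dot u v :=
  smul_dotProduct _ _ _

theorem dot_smul_right (a : ℝ) (u v : E3) : dot u (a • v) = a * dot u v :=
  dotProduct_smul _ _ _

theorem dot_self_eq_norm_sq (u : E3) : dot u u = ‖u‖ ^ 2 := by
  rw [EuclideanSpace.real_norm_sq_eq]
  simp only [dot, sq]

theorem dot_cross_eq_neg_dot_cross (u v w : E3) : dot u (cross v w) = -dot (cross u w) v := by
  simp only [dot_eq_dotProduct, cross_eq_toLp]
  rw [triple_product_permutation, ← cross_anticomm, dotProduct_neg, dotProduct_comm]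

theorem cross_self_eq_zero (u : E3) : cross u u = 0 := by
  simp [cross_eq_toLp]

theorem neg_cross_eq_cross (u v : E3) : -cross u v = cross v u := by
  simp [cross_eq_toLp, ← WithLp.toLp_neg]

theorem cross_smul_left (a : ℝ) (u v : E3) : cross (a • u) v = a • cross u v := by
  simp [cross_eq_toLp]

theorem cross_add_smul_add_smul (a c : ℝ) (u v : E3) :
    cross (u + a • v) (u + c • v) = (c - a) • cross u v := by
  simp only [cross_eq_toLp, WithLp.ofLp_add, WithLp.ofLp_smul, map_add, map_smul,
    LinearMap.add_apply, LinearMap.smul_apply, cross_self, ← cross_anticomm u.ofLp v.ofLp,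
    ← WithLp.toLp_smul]
  congr 1
  module

theorem cross_cross_eq_self {t n : E3} (hn : ‖n‖ = 1) (htn : dot t n = 0) :
    cross n (cross t n) = t := by
  have hnn : dot n n = 1 := by rw [dot_self_eq_norm_sq, hn, one_pow]
  rw [dot_eq_dotProduct] at hnn htn
  simp [cross_eq_toLp, cross_cross_eq_smul_sub_smul', hnn, htn]

theorem IsFrameOn.tangent_eq_cross {t n b : E3 → E3} {U : Set E3} {x : E3}
    (h : IsFrameOn t n b U) (hx : x ∈ U) : t x = cross (n x) (b x) := by
  obtain ⟨-, -, -, hframe⟩ := h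
  obtain ⟨-, hnx, -, htn, -, -, hbx⟩ := hframe x hx
  rw [hbx, cross_cross_eq_self hnx htn]

end VectorAlgebra

section Calculus

theorem fderiv_log_div {E : Type*} [NormedAddCommGroup E] [NormedSpace ℝ E] {f g : E → ℝ} {x : E}
    (hf : DifferentiableAt ℝ f x) (hg : DifferentiableAt ℝ g x) (hf0 : f x ≠ 0) (hg0 : g x ≠ 0) :
    fderiv ℝ (fun y => Real.log (f y / g y)) x
      = (f x)⁻¹ • fderiv ℝ f x - (g x)⁻¹ • fderiv ℝ g x := by
  have hlog : (fun y => Real.log (f y / g y)) =ᶠ[𝓝 x] fun y => Real.log (f y) - Real.log (g y) := by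
    filter_upwards [hf.continuousAt.eventually_ne hf0, hg.continuousAt.eventually_ne hg0]
      with y hfy hgy using Real.log_div hfy hgy
  rw [hlog.fderiv_eq, fderiv_fun_sub (hf.log hf0) (hg.log hg0), fderiv.log hf hf0,
    fderiv.log hg hg0]

variable {F G : E3 → E3} {f g : E3 → ℝ} {x : E3}

theorem dot_grad (v : E3) (f : E3 → ℝ) (x : E3) : dot v (grad f x) = fderiv ℝ f x v := by
  conv_rhs => rw [← (EuclideanSpace.basisFun (Fin 3) ℝ).sum_repr v]
  simp [dot, grad, pd, Fin.sum_univ_three]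

theorem pd_add (i : Fin 3) (hf : DifferentiableAt ℝ f x) (hg : DifferentiableAt ℝ g x) :
    pd i (fun y => f y + g y) x = pd i f x + pd i g x := by
  simp [pd, fderiv_fun_add hf hg]

theorem pd_mul (i : Fin 3) (hf : DifferentiableAt ℝ f x) (hg : DifferentiableAt ℝ g x) :
    pd i (fun y => f y * g y) x = f x * pd i g x + g x * pd i f x := by
  simp [pd, fderiv_fun_mul hf hg]

theorem curl_add (hF : DifferentiableAt ℝ F x) (hG : DifferentiableAt ℝ G x) :
    curl (fun y => F y + G y) x = curl F x + curl G x := by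
  have hFi := differentiableAt_euclidean.1 hF
  have hGi := differentiableAt_euclidean.1 hG
  ext i
  fin_cases i <;> simp [curl, pd_add _ (hFi _) (hGi _)] <;> ring

theorem curl_smul (hf : DifferentiableAt ℝ f x) (hF : DifferentiableAt ℝ F x) :
    curl (fun y => f y • F y) x = cross (grad f x) (F x) + f x • curl F x := by
  have hFi := differentiableAt_euclidean.1 hF
  ext i
  fin_cases i <;> simp [curl, cross, grad, pd_mul _ hf (hFi _)] <;> ring

end Calculus

section CrossHelicity

variable {F G H : E3 → E3} {f g : E3 → ℝ} {x : E3}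

theorem crossHel_comm (F G : E3 → E3) (x : E3) : crossHel F G x = crossHel G F x :=
  add_comm _ _

theorem crossHel_self (F : E3 → E3) (x : E3) : crossHel F F x = 2 * hel F x :=
  (two_mul _).symm

theorem crossHel_add_right (F : E3 → E3) (hG : DifferentiableAt ℝ G x)
    (hH : DifferentiableAt ℝ H x) :
    crossHel F (fun y => G y + H y) x = crossHel F G x + crossHel F H x := by
  simp only [crossHel, curl_add hG hH, dot_add_left, dot_add_right]
  ring

theorem crossHel_add_left (hF : DifferentiableAt ℝ F x) (hG : DifferentiableAt ℝ G x)
    (H : E3 → E3) :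
    crossHel (fun y => F y + G y) H x = crossHel F H x + crossHel G H x := by
  simp only [crossHel_comm _ H, crossHel_add_right H hF hG]

theorem crossHel_smul_right (F : E3 → E3) (hg : DifferentiableAt ℝ g x)
    (hG : DifferentiableAt ℝ G x) :
    crossHel F (fun y => g y • G y) x
      = g x * crossHel F G x - fderiv ℝ g x (cross (F x) (G x)) := by
  simp only [crossHel, curl_smul hg hG, dot_add_right, dot_smul_left, dot_smul_right,
    dot_cross_eq_neg_dot_cross, dot_grad]
  ring

theorem crossHel_smul_left (hf : DifferentiableAt ℝ f x) (hF : DifferentiableAt ℝ F x)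
    (G : E3 → E3) :
    crossHel (fun y => f y • F y) G x
      = f x * crossHel F G x + fderiv ℝ f x (cross (F x) (G x)) := by
  rw [crossHel_comm, crossHel_smul_right G hf hF, crossHel_comm G, ← neg_cross_eq_cross, map_neg,
    sub_neg_eq_add]

theorem crossHel_smul_smul (hf : DifferentiableAt ℝ f x) (hF : DifferentiableAt ℝ F x)
    (hg : DifferentiableAt ℝ g x) (hG : DifferentiableAt ℝ G x) :
    crossHel (fun y => f y • F y) (fun y => g y • G y) x
      = f x * g x * crossHel F G x + g x * fderiv ℝ f x (cross (F x) (G x))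
        - f x * fderiv ℝ g x (cross (F x) (G x)) := by
  rw [crossHel_smul_right _ hg hG, crossHel_smul_left hf hF, cross_smul_left, map_smul,
    smul_eq_mul]
  ring

theorem crossHel_add_smul_add_smul {n b : E3 → E3} {μ₁ μ₂ : E3 → ℝ}
    (hn : DifferentiableAt ℝ n x) (hb : DifferentiableAt ℝ b x)
    (hμ₁ : DifferentiableAt ℝ μ₁ x) (hμ₂ : DifferentiableAt ℝ μ₂ x) :
    crossHel (fun y => n y + μ₁ y • b y) (fun y => n y + μ₂ y • b y) x
      = 2 * hel n x + (μ₁ x + μ₂ x) * crossHel n b x + 2 * μ₁ x * μ₂ x * hel b x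
        - fderiv ℝ μ₁ x (cross (n x) (b x)) - fderiv ℝ μ₂ x (cross (n x) (b x)) := by
  have hμb₁ : DifferentiableAt ℝ (fun y => μ₁ y • b y) x := hμ₁.fun_smul hb
  have hμb₂ : DifferentiableAt ℝ (fun y => μ₂ y • b y) x := hμ₂.fun_smul hb
  have hnμb : crossHel n (fun y => μ₂ y • b y) x
      = μ₂ x * crossHel n b x - fderiv ℝ μ₂ x (cross (n x) (b x)) :=
    crossHel_smul_right n hμ₂ hb
  have hμbn : crossHel (fun y => μ₁ y • b y) n x
      = μ₁ x * crossHel n b x - fderiv ℝ μ₁ x (cross (n x) (b x)) := by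
    rw [crossHel_comm, crossHel_smul_right n hμ₁ hb]
  have hμbμb : crossHel (fun y => μ₁ y • b y) (fun y => μ₂ y • b y) x
      = 2 * μ₁ x * μ₂ x * hel b x := by
    simp only [crossHel_smul_smul hμ₁ hb hμ₂ hb, crossHel_self, cross_self_eq_zero, map_zero]
    ring
  rw [crossHel_add_left hn hμb₁, crossHel_add_right n hn hμb₂,
    crossHel_add_right _ hn hμb₂, crossHel_self, hnμb, hμbn, hμbμb]
  ring

end CrossHelicity

theorem riccati_poisson_vectors_compatible_general
    {t n b : E3 → E3} {α₁ α₂ μ₁ μ₂ : E3 → ℝ} {x : E3}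
    (ht : t x = cross (n x) (b x))
    (hn : DifferentiableAt ℝ n x) (hb : DifferentiableAt ℝ b x)
    (hα₁ : DifferentiableAt ℝ α₁ x) (hα₂ : DifferentiableAt ℝ α₂ x)
    (hμ₁ : DifferentiableAt ℝ μ₁ x) (hμ₂ : DifferentiableAt ℝ μ₂ x)
    (hα₁0 : α₁ x ≠ 0) (hα₂0 : α₂ x ≠ 0)
    (hric₁ : ds t μ₁ x = hel n x + μ₁ x * crossHel n b x + μ₁ x ^ 2 * hel b x)
    (hric₂ : ds t μ₂ x = hel n x + μ₂ x * crossHel n b x + μ₂ x ^ 2 * hel b x)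
    (hlog : ds t (fun y => Real.log (α₂ y / α₁ y)) x = (μ₁ x - μ₂ x) * hel b x) :
    crossHel (fun y => α₁ y • (n y + μ₁ y • b y)) (fun y => α₂ y • (n y + μ₂ y • b y)) x = 0 := by
  rw [ds, dot_grad, ht] at hric₁ hric₂ hlog
  have hv : crossHel (fun y => n y + μ₁ y • b y) (fun y => n y + μ₂ y • b y) x
      = -(μ₁ x - μ₂ x) ^ 2 * hel b x := by
    rw [crossHel_add_smul_add_smul hn hb hμ₁ hμ₂, hric₁, hric₂]
    ring
  have hα : α₁ x * fderiv ℝ α₂ x (cross (n x) (b x)) - α₂ x * fderiv ℝ α₁ x (cross (n x) (b x))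
      = α₁ x * α₂ x * ((μ₁ x - μ₂ x) * hel b x) := by
    rw [← hlog, fderiv_log_div hα₂ hα₁ hα₂0 hα₁0]
    simp only [sub_apply, smul_apply, smul_eq_mul]
    field_simp
  rw [crossHel_smul_smul hα₁ (hn.fun_add (hμ₁.fun_smul hb)) hα₂ (hn.fun_add (hμ₂.fun_smul hb)),
    hv, cross_add_smul_add_smul, map_smul, map_smul, smul_eq_mul, smul_eq_mul]
  linear_combination (μ₁ x - μ₂ x) * hα

/-- Poisson vectors Jᵢ = αᵢ(n + μᵢ b) built from solutions of the
Riccati equation are compatible provided ∂ₛ ln(α₂/α₁) = (μ₁ − μ₂) Ωᵦ. -/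
theorem riccati_poisson_vectors_compatible
    (U : Set E3) (hU : IsOpen U) (t n b : E3 → E3)
    (hframe : IsFrameOn t n b U)
    (hΩb : ∀ x ∈ U, hel b x ≠ 0)
    (α₁ α₂ μ₁ μ₂ : E3 → ℝ)
    (hα₁ : ContDiffOn ℝ (⊤ : ℕ∞) α₁ U) (hα₂ : ContDiffOn ℝ (⊤ : ℕ∞) α₂ U)
    (hμ₁ : ContDiffOn ℝ (⊤ : ℕ∞) μ₁ U) (hμ₂ : ContDiffOn ℝ (⊤ : ℕ∞) μ₂ U)
    (hα₁0 : ∀ x ∈ U, α₁ x ≠ 0) (hα₂0 : ∀ x ∈ U, α₂ x ≠ 0)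
    (hric₁ : ∀ x ∈ U, ds t μ₁ x = hel n x + μ₁ x * crossHel n b x + μ₁ x ^ 2 * hel b x)
    (hric₂ : ∀ x ∈ U, ds t μ₂ x = hel n x + μ₂ x * crossHel n b x + μ₂ x ^ 2 * hel b x)
    (hlog : ∀ x ∈ U, ds t (fun y => Real.log (α₂ y / α₁ y)) x
        = (μ₁ x - μ₂ x) * hel b x) :
    ∀ x ∈ U,
      dot (α₁ x • (n x + μ₁ x • b x)) (curl (fun y => α₂ y • (n y + μ₂ y • b y)) x)
        + dot (α₂ x • (n x + μ₂ x • b x)) (curl (fun y => α₁ y • (n y + μ₁ y • b y)) x)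
        = 0 := by
  intro x hx
  have hd {E : Type} [NormedAddCommGroup E] [NormedSpace ℝ E] {F : E3 → E}
      (hF : ContDiffOn ℝ (⊤ : ℕ∞) F U) : DifferentiableAt ℝ F x :=
    (hF.contDiffAt (hU.mem_nhds hx)).differentiableAt (by simp)
  exact riccati_poisson_vectors_compatible_general (hframe.tangent_eq_cross hx)
    (hd hframe.2.1) (hd hframe.2.2.1) (hd hα₁) (hd hα₂) (hd hμ₁) (hd hμ₂)
    (hα₁0 x hx) (hα₂0 x hx) (hric₁ x hx) (hric₂ x hx) (hlog x hx)
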